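/- Let (X,d,F) and (X',d',F') be filtered chain complexes over ZMod 2, let f : X → X' and g : X' → X be filtered chain maps, and let x ∈ X satisfy g (f x) = x. Then the infimum (in WithTop ℤ) of {i : x ∈ Submodule.map d (F i)} equals the infimum of {i : f x ∈ Submodule.map d' (F' i)}; that is, κ(x) = κ'(f x). (Second assertion of the paper's Lemma 3.1, which underlies the invariance of κ under braid conjugation and braid isotopy.) -/

import Mathlib

/-!
A filtered chain map sends a primitive of `x` in `F i` to a primitive of `f x` in `F' i`, so every
level at which `x` bounds is a level at which `f x` bounds. Applied to `g` at `f x`, with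
`g (f x) = x`, this gives the reverse inclusion. The sets of levels have to be compared, not their
infima: on `WithTop ℤ`, `sInf` takes the value `⊤` on a set that is unbounded below, and so it
does not turn an inclusion of sets into an inequality.
-/

section BoundingLevels

variable {ι R X Y X' Y' : Type*} [Semiring R]
  [AddCommMonoid X] [Module R X] [AddCommMonoid Y] [Module R Y]
  [AddCommMonoid X'] [Module R X'] [AddCommMonoid Y'] [Module R Y']

/-- The levels `i` at which `y` is the boundary of an element of `F i`; the infimum of this set is
the invariant `κ(y)`. The differential may have distinct source and target, as in a graded complex;
for an ungraded complex the two coincide. -/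
def boundingLevels (d : X →ₗ[R] Y) (F : ι → Submodule R X) (y : Y) : Set ι :=
  {i | y ∈ Submodule.map d (F i)}

variable {d : X →ₗ[R] Y} {d' : X' →ₗ[R] Y'}

theorem map_map_le_map_of_comp_eq_comp {f₁ : X →ₗ[R] X'} {f₀ : Y →ₗ[R] Y'}
    (hf : f₀ ∘ₗ d = d' ∘ₗ f₁) {p : Submodule R X} {p' : Submodule R X'}
    (hp : Submodule.map f₁ p ≤ p') :
    Submodule.map f₀ (Submodule.map d p) ≤ Submodule.map d' p' :=
  calc
    Submodule.map f₀ (Submodule.map d p) = Submodule.map d' (Submodule.map f₁ p) := by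
      rw [← Submodule.map_comp, hf, Submodule.map_comp]
    _ ≤ Submodule.map d' p' := Submodule.map_mono hp

variable {F : ι → Submodule R X} {F' : ι → Submodule R X'}

theorem boundingLevels_subset_of_filtered_chain_map {f₁ : X →ₗ[R] X'} {f₀ : Y →ₗ[R] Y'}
    (hf : f₀ ∘ₗ d = d' ∘ₗ f₁) (hfF : ∀ i, Submodule.map f₁ (F i) ≤ F' i) (y : Y) :
    boundingLevels d F y ⊆ boundingLevels d' F' (f₀ y) :=
  fun i hy => map_map_le_map_of_comp_eq_comp hf (hfF i) (Submodule.mem_map_of_mem hy)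

theorem kappa_eq_of_filtered_chain_maps_general
    {f₁ : X →ₗ[R] X'} {f₀ : Y →ₗ[R] Y'} (hf : f₀ ∘ₗ d = d' ∘ₗ f₁)
    (hfF : ∀ i, Submodule.map f₁ (F i) ≤ F' i)
    {g₁ : X' →ₗ[R] X} {g₀ : Y' →ₗ[R] Y} (hg : g₀ ∘ₗ d' = d ∘ₗ g₁)
    (hgF : ∀ i, Submodule.map g₁ (F' i) ≤ F i)
    {y : Y} (hgf : g₀ (f₀ y) = y) :
    boundingLevels d F y = boundingLevels d' F' (f₀ y) := by
  apply Set.Subset.antisymm (boundingLevels_subset_of_filtered_chain_map hf hfF y)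
  simpa only [hgf] using boundingLevels_subset_of_filtered_chain_map hg hgF (f₀ y)

end BoundingLevels

/-- Second assertion of Lemma 3.1: if `f` and `g` are filtered chain maps with
`g (f x) = x`, then `κ(x) = κ'(f x)`. -/
theorem kappa_eq_of_filtered_chain_maps
    {X X' : Type*} [AddCommGroup X] [Module (ZMod 2) X]
    [AddCommGroup X'] [Module (ZMod 2) X']
    (d : X →ₗ[ZMod 2] X) (hd : d ∘ₗ d = 0)
    (F : ℤ → Submodule (ZMod 2) X) (hF : Monotone F)
    (hdF : ∀ i : ℤ, Submodule.map d (F i) ≤ F i)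
    (d' : X' →ₗ[ZMod 2] X') (hd' : d' ∘ₗ d' = 0)
    (F' : ℤ → Submodule (ZMod 2) X') (hF' : Monotone F')
    (hdF' : ∀ i : ℤ, Submodule.map d' (F' i) ≤ F' i)
    (f : X →ₗ[ZMod 2] X') (hf : f ∘ₗ d = d' ∘ₗ f)
    (hfF : ∀ i : ℤ, Submodule.map f (F i) ≤ F' i)
    (g : X' →ₗ[ZMod 2] X) (hg : g ∘ₗ d' = d ∘ₗ g)
    (hgF : ∀ i : ℤ, Submodule.map g (F' i) ≤ F i)
    (x : X) (hgf : g (f x) = x) :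
    sInf ((fun i : ℤ => (i : WithTop ℤ)) ''
        {i : ℤ | x ∈ Submodule.map d (F i)}) =
      sInf ((fun i : ℤ => (i : WithTop ℤ)) ''
        {i : ℤ | f x ∈ Submodule.map d' (F' i)}) :=
  congrArg (fun levels : Set ℤ => sInf ((fun i : ℤ => (i : WithTop ℤ)) '' levels))
    (kappa_eq_of_filtered_chain_maps_general hf hfF hg hgF hgf)
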